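/- Let n ≥ 2 and let h : ∂B → ℝ be continuous. Then for every θ* ∈ ∂B, lim_{x→θ*, x∈B} (1−|x|)·∫_{∂B} |h(θ)−h(θ*)|·|x−θ|^{−n} dH^{n−1}(θ) = 0. -/

import Mathlib

open MeasureTheory Real Set Filter

/-!
Two stereographic charts show that the surface measure `σ` of the sphere gives mass `O(r ^ (n - 1))`
to a ball of radius `r` around any point. Summing over dyadic annuli around `x`, whose distance to
the sphere is `|1 - ‖x‖|`, the kernel `|1 - ‖x‖| * ‖x - θ‖ ^ (-n)` has `σ`-mass bounded
uniformly in `x`. As `x → θ*` it tends to `0` uniformly away from `θ*`, so it concentrates at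
`θ*`, where `|h - h θ*|` vanishes.
-/

open Metric Module
open scoped ENNReal NNReal Topology RealInnerProductSpace

/-- A measure is *upper Ahlfors regular* of dimension `m` if balls of radius `r` have mass
`O(r ^ m)`, uniformly in the centre, which need not lie in the support, and in the radius. -/
def UpperAhlforsRegular {X : Type*} [PseudoMetricSpace X] [MeasurableSpace X] (ν : Measure X)
    (m : ℕ) : Prop :=
  ∃ C : ℝ≥0, ∀ (x : X) (r : ℝ≥0), ν (closedBall x r) ≤ C * r ^ m

namespace UpperAhlforsRegular

section Measure

variable {X : Type*} [PseudoMetricSpace X] [MeasurableSpace X] {μ ν : Measure X} {m : ℕ}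

theorem mono (hν : UpperAhlforsRegular ν m) (h : μ ≤ ν) : UpperAhlforsRegular μ m :=
  let ⟨C, hC⟩ := hν
  ⟨C, fun x r => (h _).trans (hC x r)⟩

theorem add (hμ : UpperAhlforsRegular μ m) (hν : UpperAhlforsRegular ν m) :
    UpperAhlforsRegular (μ + ν) m := by
  obtain ⟨C, hC⟩ := hμ
  obtain ⟨D, hD⟩ := hν
  refine ⟨C + D, fun x r => ?_⟩
  rw [Measure.add_apply, ENNReal.coe_add, add_mul]
  exact add_le_add (hC x r) (hD x r)

theorem measure_lt_top (hν : UpperAhlforsRegular ν m) {s : Set X} (hs : Bornology.IsBounded s) :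
    ν s < ∞ := by
  obtain ⟨C, hC⟩ := hν
  rcases s.eq_empty_or_nonempty with rfl | ⟨x, -⟩
  · simp
  obtain ⟨r, hr⟩ := hs.subset_closedBall x
  calc ν s ≤ ν (closedBall x r.toNNReal) :=
        measure_mono (hr.trans (closedBall_subset_closedBall r.le_coe_toNNReal))
    _ ≤ C * r.toNNReal ^ m := hC _ _
    _ < ∞ := by finiteness

end Measure

theorem hausdorffMeasure_image {X Y : Type*} [MetricSpace X] [MeasurableSpace X] [BorelSpace X]
    [MetricSpace Y] [MeasurableSpace Y] [BorelSpace Y] {d : ℝ} {m : ℕ} {s : Set X} {f : X → Y}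
    {K L : ℝ≥0} (hs : UpperAhlforsRegular (μH[d].restrict s) m) (hd : 0 ≤ d)
    (hK : LipschitzOnWith K f s) (hL : AntilipschitzWith L (s.domRestrict f)) :
    UpperAhlforsRegular (μH[d].restrict (f '' s)) m := by
  obtain ⟨C, hC⟩ := hs
  refine ⟨K ^ d * C * (2 * L) ^ m, fun y r => ?_⟩
  rw [Measure.restrict_apply measurableSet_closedBall]
  rcases (closedBall y r ∩ f '' s).eq_empty_or_nonempty with h | ⟨_, ha, a, has, rfl⟩
  · simp [h]
  have hsub : closedBall y r ∩ f '' s ⊆ f '' (closedBall a (2 * L * r : ℝ≥0) ∩ s) := by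
    rintro _ ⟨hb, b, hbs, rfl⟩
    refine ⟨b, ⟨?_, hbs⟩, rfl⟩
    calc dist b a ≤ L * dist (f b) (f a) := hL.le_mul_dist ⟨b, hbs⟩ ⟨a, has⟩
      _ ≤ L * (r + r) := by gcongr; exact (dist_triangle_right _ _ y).trans (add_le_add hb ha)
      _ = (2 * L * r : ℝ≥0) := by push_cast; ring
  calc μH[d] (closedBall y r ∩ f '' s)
      ≤ μH[d] (f '' (closedBall a (2 * L * r : ℝ≥0) ∩ s)) := measure_mono hsub
    _ ≤ K ^ d * μH[d] (closedBall a (2 * L * r : ℝ≥0) ∩ s) :=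
        (hK.mono inter_subset_right).hausdorffMeasure_image_le hd
    _ = K ^ d * μH[d].restrict s (closedBall a (2 * L * r : ℝ≥0)) := by
        rw [Measure.restrict_apply measurableSet_closedBall]
    _ ≤ K ^ d * (C * (2 * L * r : ℝ≥0) ^ m) := by gcongr; exact hC _ _
    _ = (K ^ d * C * (2 * L) ^ m : ℝ≥0) * r ^ m := by
        push_cast [ENNReal.coe_rpow_of_nonneg _ hd]; ring

theorem of_isAddHaarMeasure {F : Type*} [NormedAddCommGroup F] [NormedSpace ℝ F]
    [FiniteDimensional ℝ F] [MeasurableSpace F] [BorelSpace F] (μ : Measure F)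
    [μ.IsAddHaarMeasure] : UpperAhlforsRegular μ (finrank ℝ F) := by
  refine ⟨(μ (ball 0 1)).toNNReal, fun x r => le_of_eq ?_⟩
  rw [Measure.addHaar_closedBall μ x r.coe_nonneg, ENNReal.coe_toNNReal measure_ball_lt_top.ne,
    mul_comm, ENNReal.ofReal_pow r.coe_nonneg, ENNReal.ofReal_coe_nnreal]

end UpperAhlforsRegular

theorem compl_ball_subset_iUnion_annulus {X : Type*} [PseudoMetricSpace X] (x : X) {δ : ℝ}
    (hδ : 0 < δ) :
    (ball x δ)ᶜ ⊆ ⋃ k : ℕ, closedBall x (2 * (2 ^ k * δ)) \ ball x (2 ^ k * δ) := by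
  intro θ hθ
  have hδθ : δ ≤ dist θ x := by simpa using hθ
  obtain ⟨k, hk, hk'⟩ := exists_nat_pow_near ((one_le_div hδ).2 hδθ) one_lt_two
  rw [le_div_iff₀ hδ] at hk
  rw [div_lt_iff₀ hδ, pow_succ'] at hk'
  exact mem_iUnion.2 ⟨k, mem_closedBall.2 (by linarith), by simpa using hk⟩

section Kernel

variable {X : Type*} [PseudoMetricSpace X] [MeasurableSpace X] [OpensMeasurableSpace X]
  {ν : Measure X} {m : ℕ}

theorem setLIntegral_annulus_inv_edist_pow_le {C r : ℝ≥0} {x : X} (hr : r ≠ 0)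
    (hC : ν (closedBall x (2 * r)) ≤ C * (2 * r) ^ m) :
    ∫⁻ θ in closedBall x (2 * r) \ ball x r, (edist x θ ^ (m + 1))⁻¹ ∂ν ≤ C * 2 ^ m / r := by
  have hr' : (r : ℝ≥0∞) ≠ 0 := by simpa
  calc ∫⁻ θ in closedBall x (2 * r) \ ball x r, (edist x θ ^ (m + 1))⁻¹ ∂ν
      ≤ ∫⁻ _ in closedBall x (2 * r) \ ball x r, (r ^ (m + 1) : ℝ≥0∞)⁻¹ ∂ν := by
        refine setLIntegral_mono' (measurableSet_closedBall.diff measurableSet_ball) fun θ hθ => ?_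
        have : (r : ℝ≥0∞) ≤ edist x θ := by
          have hrθ : (r : ℝ) ≤ dist x θ := not_lt.1 (mem_ball'.not.1 hθ.2)
          rw [edist_nndist]
          exact_mod_cast hrθ
        gcongr
    _ ≤ (r ^ (m + 1) : ℝ≥0∞)⁻¹ * (C * (2 * r) ^ m) := by
        rw [setLIntegral_const]
        gcongr
        exact (measure_mono sdiff_subset).trans hC
    _ = C * 2 ^ m * (r : ℝ≥0∞)⁻¹ * ((r ^ m : ℝ≥0∞)⁻¹ * r ^ m) := by
        rw [pow_succ, ENNReal.mul_inv (by simp) (by simp)]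
        ring
    _ = C * 2 ^ m / r := by
        rw [ENNReal.inv_mul_cancel (pow_ne_zero _ hr') (by finiteness), mul_one, div_eq_mul_inv]

theorem UpperAhlforsRegular.exists_mul_setLIntegral_compl_ball_le
    (hν : UpperAhlforsRegular ν m) :
    ∃ A : ℝ≥0, ∀ (x : X) (δ : ℝ≥0),
      δ * ∫⁻ θ in (ball x δ)ᶜ, (edist x θ ^ (m + 1))⁻¹ ∂ν ≤ A := by
  obtain ⟨C, hC⟩ := hν
  refine ⟨C * 2 ^ m * 2, fun x δ => ?_⟩
  rcases eq_or_ne δ 0 with rfl | hδ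
  · simp
  have hannulus (k : ℕ) : ∫⁻ θ in closedBall x (2 * (2 ^ k * δ)) \ ball x (2 ^ k * δ),
      (edist x θ ^ (m + 1))⁻¹ ∂ν ≤ C * 2 ^ m / δ * 2⁻¹ ^ k := by
    have h := setLIntegral_annulus_inv_edist_pow_le (r := 2 ^ k * δ) (by positivity)
      (by simpa using hC x (2 * (2 ^ k * δ)))
    refine le_of_le_of_eq (by simpa using h) ?_
    rw [div_eq_mul_inv, div_eq_mul_inv, ENNReal.mul_inv (by simp) (by simp), ENNReal.inv_pow]
    ring
  calc δ * ∫⁻ θ in (ball x δ)ᶜ, (edist x θ ^ (m + 1))⁻¹ ∂ν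
      ≤ δ * ∑' k : ℕ, ∫⁻ θ in closedBall x (2 * (2 ^ k * δ)) \ ball x (2 ^ k * δ),
          (edist x θ ^ (m + 1))⁻¹ ∂ν := by
        gcongr
        exact (lintegral_mono_set (compl_ball_subset_iUnion_annulus x (by positivity))).trans
          (lintegral_iUnion_le _ _)
    _ ≤ δ * ∑' k : ℕ, (C * 2 ^ m / δ * 2⁻¹ ^ k : ℝ≥0∞) := by
        gcongr with k
        exact hannulus k
    _ = C * 2 ^ m * 2 := by
        rw [ENNReal.tsum_mul_left, ENNReal.tsum_geometric, ENNReal.one_sub_inv_two, inv_inv,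
          ← mul_assoc, ENNReal.mul_div_cancel (by simpa) (by simp)]
    _ = (C * 2 ^ m * 2 : ℝ≥0) := by push_cast; rfl

end Kernel

theorem tendsto_lintegral_peak_mul_zero {X ι : Type*} [MeasurableSpace X] {ν : Measure X}
    {l : Filter ι} {L : Filter X} {φ : ι → X → ℝ≥0∞} {g : X → ℝ≥0∞} {A : ℝ≥0∞} (hA : A ≠ ∞)
    (hφ : ∀ i, AEMeasurable (φ i) ν) (hφA : ∀ᶠ i in l, ∫⁻ θ, φ i θ ∂ν ≤ A)
    (hφL : ∀ U ∈ L, ∀ ε > 0, ∀ᶠ i in l, ∀ᵐ θ ∂ν, θ ∉ U → φ i θ ≤ ε)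
    (hg : AEMeasurable g ν) (hg_fin : ∫⁻ θ, g θ ∂ν ≠ ∞) (hgL : Tendsto g L (𝓝 0)) :
    Tendsto (fun i => ∫⁻ θ, φ i θ * g θ ∂ν) l (𝓝 0) := by
  refine ENNReal.tendsto_nhds_zero.2 fun ε hε => ?_
  set c : ℝ≥0∞ := ε / (A + ∫⁻ θ, g θ ∂ν)
  have hc : 0 < c := ENNReal.div_pos hε.ne' (by finiteness)
  have hU : {θ | g θ ≤ c} ∈ L := ENNReal.tendsto_nhds_zero.1 hgL c hc
  filter_upwards [hφA, hφL _ hU c hc] with i hiA hic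
  calc ∫⁻ θ, φ i θ * g θ ∂ν ≤ ∫⁻ θ, (φ i θ + g θ) * c ∂ν := by
        refine lintegral_mono_ae ?_
        filter_upwards [hic] with θ hθ
        rw [add_mul]
        by_cases hgθ : g θ ≤ c
        · exact le_add_right (by gcongr)
        · exact le_add_left (by rw [mul_comm]; gcongr; exact hθ hgθ)
    _ = (∫⁻ θ, φ i θ ∂ν + ∫⁻ θ, g θ ∂ν) * c := by
        rw [lintegral_mul_const'' c (by fun_prop), lintegral_add_left' (hφ i)]
    _ ≤ (A + ∫⁻ θ, g θ ∂ν) * c := by gcongr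
    _ ≤ ε := ENNReal.mul_div_le

theorem eventually_mul_inv_edist_pow_le {X ι : Type*} [PseudoEMetricSpace X] {l : Filter ι}
    {x : ι → X} {δ : ι → ℝ≥0} {ω : X} (hx : Tendsto x l (𝓝 ω)) (hδ : Tendsto δ l (𝓝 0)) (k : ℕ)
    {V : Set X} (hV : V ∈ 𝓝 ω) {ε : ℝ≥0∞} (hε : 0 < ε) :
    ∀ᶠ i in l, ∀ θ ∉ V, δ i * (edist (x i) θ ^ k)⁻¹ ≤ ε := by
  obtain ⟨η, hη, hηV⟩ := EMetric.mem_nhds_iff.1 hV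
  have hη2 : 0 < η / 2 := ENNReal.half_pos hη.ne'
  have hδη : Tendsto (fun i => (δ i : ℝ≥0∞) * ((η / 2) ^ k)⁻¹) l (𝓝 0) := by
    simpa using ENNReal.Tendsto.mul_const (ENNReal.tendsto_coe.2 hδ)
      (Or.inr (ENNReal.inv_ne_top.2 (pow_ne_zero k hη2.ne')))
  filter_upwards [hx (eball_mem_nhds ω hη2), ENNReal.tendsto_nhds_zero.1 hδη ε hε]
    with i hi hiε θ hθ
  refine le_trans ?_ hiε
  gcongr
  by_contra! h
  refine hθ (hηV ?_)
  calc edist θ ω ≤ edist (x i) θ + edist (x i) ω := by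
        rw [edist_comm (x i) θ]; exact edist_triangle _ _ _
    _ < η / 2 + η / 2 := ENNReal.add_lt_add h hi
    _ = η := ENNReal.add_halves η

theorem UpperAhlforsRegular.tendsto_lintegral_mul_inv_edist_pow {X ι : Type*}
    [PseudoMetricSpace X] [MeasurableSpace X] [OpensMeasurableSpace X] {ν : Measure X} {m : ℕ}
    (hν : UpperAhlforsRegular ν m) {l : Filter ι} {x : ι → X} {δ : ι → ℝ≥0} {ω : X}
    (hx : Tendsto x l (𝓝 ω)) (hδ : Tendsto δ l (𝓝 0))
    (hδx : ∀ᶠ i in l, ∀ᵐ θ ∂ν, δ i ≤ nndist (x i) θ) {g : X → ℝ≥0∞} (hg : AEMeasurable g ν)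
    (hg_fin : ∫⁻ θ, g θ ∂ν ≠ ∞) (hgω : Tendsto g (𝓝 ω ⊓ ae ν) (𝓝 0)) :
    Tendsto (fun i => ∫⁻ θ, δ i * (edist (x i) θ ^ (m + 1))⁻¹ * g θ ∂ν) l (𝓝 0) := by
  obtain ⟨A, hA⟩ := hν.exists_mul_setLIntegral_compl_ball_le
  refine tendsto_lintegral_peak_mul_zero (A := A) (by simp) (fun i => by fun_prop) ?_ ?_
    hg hg_fin hgω
  · filter_upwards [hδx] with i hi
    have hfull : ν.restrict (ball (x i) (δ i))ᶜ = ν := Measure.restrict_eq_self_of_ae_mem <| by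
      filter_upwards [hi] with θ hθ hθx
      exact hθ.not_gt (mem_ball'.1 hθx)
    simpa only [hfull, lintegral_const_mul' _ _ ENNReal.coe_ne_top] using hA (x i) (δ i)
  · intro U hU ε hε
    obtain ⟨V, hV, W, hW, rfl⟩ := mem_inf_iff.1 hU
    filter_upwards [eventually_mul_inv_edist_pow_le hx hδ (m + 1) hV hε] with i hi
    filter_upwards [hW] with θ hθW hθU using hi θ fun hθV => hθU ⟨hθV, hθW⟩

section Stereographic

variable {E : Type*} [NormedAddCommGroup E] [InnerProductSpace ℝ E] {v : E}

theorem inner_stereoInvFun (hv : ‖v‖ = 1) (w : (ℝ ∙ v)ᗮ) :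
    ⟪v, stereoInvFun hv w⟫ = (‖w‖ ^ 2 - 4) / (‖w‖ ^ 2 + 4) := by
  have hw : ⟪v, (w : E)⟫ = 0 := Submodule.mem_orthogonal_singleton_iff_inner_right.1 w.2
  simp [inner_add_right, inner_smul_right, hw, hv, div_eq_inv_mul]

theorem dist_stereoInvFun_sq (hv : ‖v‖ = 1) (w z : (ℝ ∙ v)ᗮ) :
    dist (stereoInvFun hv w) (stereoInvFun hv z) ^ 2 =
      16 * dist w z ^ 2 / ((‖w‖ ^ 2 + 4) * (‖z‖ ^ 2 + 4)) := by
  have hw : ⟪(w : E), v⟫ = 0 := Submodule.mem_orthogonal_singleton_iff_inner_left.1 w.2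
  have hz : ⟪v, (z : E)⟫ = 0 := Submodule.mem_orthogonal_singleton_iff_inner_right.1 z.2
  have hinner : ⟪(stereoInvFun hv w : E), stereoInvFun hv z⟫ =
      (16 * ⟪w, z⟫ + (‖w‖ ^ 2 - 4) * (‖z‖ ^ 2 - 4)) / ((‖w‖ ^ 2 + 4) * (‖z‖ ^ 2 + 4)) := by
    simp only [stereoInvFun_apply, inner_smul_left, inner_smul_right, inner_add_left,
      inner_add_right, hw, hz, real_inner_self_eq_norm_sq, hv, Submodule.coe_inner, conj_trivial]
    field
  rw [Subtype.dist_eq, dist_eq_norm, norm_sub_sq_real, norm_eq_of_mem_sphere,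
    norm_eq_of_mem_sphere, hinner, dist_eq_norm, norm_sub_sq_real]
  field

theorem lipschitzWith_stereoInvFun (hv : ‖v‖ = 1) : LipschitzWith 1 (stereoInvFun hv) := by
  refine LipschitzWith.mk_one fun w z => ?_
  rw [← sq_le_sq₀ dist_nonneg dist_nonneg, dist_stereoInvFun_sq,
    div_le_iff₀ (by positivity), mul_comm 16]
  gcongr
  nlinarith [sq_nonneg ‖w‖, sq_nonneg ‖z‖, mul_nonneg (sq_nonneg ‖w‖) (sq_nonneg ‖z‖)]

theorem antilipschitzWith_domRestrict_stereoInvFun (hv : ‖v‖ = 1) :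
    AntilipschitzWith 2 ((closedBall 0 2).domRestrict (stereoInvFun hv)) := by
  refine AntilipschitzWith.of_le_mul_dist fun ⟨w, hw⟩ ⟨z, hz⟩ => ?_
  rw [mem_closedBall_zero_iff] at hw hz
  have hw2 : ‖w‖ ^ 2 + 4 ≤ 8 := by nlinarith [norm_nonneg w]
  have hz2 : ‖z‖ ^ 2 + 4 ≤ 8 := by nlinarith [norm_nonneg z]
  change dist w z ≤ 2 * dist (stereoInvFun hv w) (stereoInvFun hv z)
  rw [← sq_le_sq₀ dist_nonneg (by positivity), mul_pow, dist_stereoInvFun_sq]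
  calc dist w z ^ 2 = 2 ^ 2 * (16 * dist w z ^ 2 / (8 * 8)) := by ring
    _ ≤ 2 ^ 2 * (16 * dist w z ^ 2 / ((‖w‖ ^ 2 + 4) * (‖z‖ ^ 2 + 4))) := by gcongr

theorem mem_image_stereoInvFun_of_inner_nonpos (hv : ‖v‖ = 1) {θ : sphere (0 : E) 1}
    (hθ : ⟪v, (θ : E)⟫ ≤ 0) : θ ∈ stereoInvFun hv '' closedBall 0 2 := by
  have hθv : (θ : E) ≠ v := by rintro h; norm_num [h, hv] at hθ
  refine ⟨stereoToFun v θ, ?_, stereo_left_inv hv hθv⟩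
  rw [← stereo_left_inv hv hθv, inner_stereoInvFun, div_le_iff₀ (by positivity)] at hθ
  rw [mem_closedBall_zero_iff]
  nlinarith

theorem image_stereoInvFun_union_image_neg (hv : ‖v‖ = 1) (hv' : ‖-v‖ = 1) :
    stereoInvFun hv '' closedBall 0 2 ∪ stereoInvFun hv' '' closedBall 0 2 = univ := by
  refine eq_univ_of_forall fun θ => ?_
  rcases le_total ⟪v, (θ : E)⟫ 0 with h | h
  · exact Or.inl (mem_image_stereoInvFun_of_inner_nonpos hv h)
  · exact Or.inr (mem_image_stereoInvFun_of_inner_nonpos hv' (by simpa using h))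

end Stereographic

section Sphere

variable {E : Type*} [NormedAddCommGroup E] [InnerProductSpace ℝ E] [MeasurableSpace E]
  [BorelSpace E] (m : ℕ) [Fact (finrank ℝ E = m + 1)]

theorem upperAhlforsRegular_image_stereoInvFun {v : E} (hv : ‖v‖ = 1) :
    UpperAhlforsRegular (μH[m].restrict (stereoInvFun hv '' closedBall 0 2)) m := by
  have : FiniteDimensional ℝ E := .of_fact_finrank_eq_succ m
  have hm : finrank ℝ (ℝ ∙ v)ᗮ = m :=
    Submodule.finrank_orthogonal_span_singleton (norm_ne_zero_iff.1 (by simp [hv]))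
  have hflat := UpperAhlforsRegular.of_isAddHaarMeasure
    (μH[finrank ℝ (ℝ ∙ v)ᗮ] : Measure (ℝ ∙ v)ᗮ)
  rw [hm] at hflat
  exact (hflat.mono Measure.restrict_le_self).hausdorffMeasure_image m.cast_nonneg
    (lipschitzWith_stereoInvFun hv).lipschitzOnWith
    (antilipschitzWith_domRestrict_stereoInvFun hv)

theorem upperAhlforsRegular_hausdorffMeasure_sphere :
    UpperAhlforsRegular (μH[m] : Measure (sphere (0 : E) 1)) m := by
  have : Nontrivial E := nontrivial_of_finrank_eq_succ (Fact.out : finrank ℝ E = m + 1)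
  obtain ⟨v, hv⟩ := exists_norm_eq E zero_le_one
  have hv' : ‖-v‖ = 1 := by rwa [norm_neg]
  rw [← Measure.restrict_univ (μ := μH[m]), ← image_stereoInvFun_union_image_neg hv hv']
  exact ((upperAhlforsRegular_image_stereoInvFun m hv).add
    (upperAhlforsRegular_image_stereoInvFun m hv')).mono (Measure.restrict_union_le _ _)

theorem upperAhlforsRegular_hausdorffMeasure_restrict_sphere :
    UpperAhlforsRegular (μH[m].restrict (sphere (0 : E) 1)) m := by
  have h := (upperAhlforsRegular_hausdorffMeasure_sphere (E := E) m).mono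
    (Measure.restrict_le_self (s := univ))
  simpa only [image_univ, Subtype.range_coe] using h.hausdorffMeasure_image m.cast_nonneg
    (LipschitzWith.subtype_val _).lipschitzOnWith
    ((AntilipschitzWith.subtype_coe _).domRestrict univ)

theorem hausdorffMeasure_sphere_lt_top : μH[m] (sphere (0 : E) 1) < ∞ := by
  simpa only [Measure.restrict_apply_self] using
    (upperAhlforsRegular_hausdorffMeasure_restrict_sphere (E := E) m).measure_lt_top
      (isBounded_sphere (x := 0) (r := 1))

variable {m} {F : Type*} [NormedAddCommGroup F] {h : E → F}

theorem integrableOn_sphere_of_continuousOn (hc : ContinuousOn h (sphere 0 1)) :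
    IntegrableOn h (sphere 0 1) μH[m] := by
  have : FiniteDimensional ℝ E := .of_fact_finrank_eq_succ m
  have : ProperSpace E := .of_locallyCompactSpace ℝ
  exact hc.integrableOn_of_subset_isCompact (isCompact_sphere _ _) isClosed_sphere.measurableSet
    subset_rfl (hausdorffMeasure_sphere_lt_top m).ne

theorem martin_modulus_vanishing_general {ω : E} (hω : ω ∈ sphere (0 : E) 1)
    (hint : IntegrableOn h (sphere 0 1) μH[m]) (hc : ContinuousWithinAt h (sphere 0 1) ω) :
    Tendsto
      (fun x => (1 - ‖x‖) * ∫ θ in sphere 0 1, ‖h θ - h ω‖ * (‖x - θ‖ ^ (m + 1))⁻¹ ∂μH[m])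
      (𝓝[(sphere 0 1)ᶜ] ω) (𝓝 0) := by
  set σ : Measure E := μH[m].restrict (sphere 0 1)
  have : IsFiniteMeasure σ := isFiniteMeasure_restrict.2 (hausdorffMeasure_sphere_lt_top m).ne
  have hσ : ∀ᵐ θ ∂σ, θ ∈ sphere (0 : E) 1 := ae_restrict_mem isClosed_sphere.measurableSet
  have hdiff : Integrable (fun θ => h θ - h ω) σ := hint.sub (integrable_const _)
  have hosc : Tendsto (fun θ => ‖h θ - h ω‖ₑ) (𝓝 ω ⊓ ae σ) (𝓝 0) :=
    (tendsto_zero_iff_enorm_tendsto_zero.1 (tendsto_sub_nhds_zero_iff.2 hc)).mono_left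
      (inf_le_inf_left _ (le_principal_iff.2 hσ))
  have hδ : Tendsto (fun x : E => ‖1 - ‖x‖‖₊) (𝓝[(sphere 0 1)ᶜ] ω) (𝓝 0) := by
    have hcont : Continuous fun x : E => ‖1 - ‖x‖‖₊ := by fun_prop
    simpa [mem_sphere_zero_iff_norm.1 hω] using hcont.continuousWithinAt.tendsto (x := ω)
  have hδ_le (x : E) : ∀ᵐ θ ∂σ, ‖1 - ‖x‖‖₊ ≤ nndist x θ := by
    filter_upwards [hσ] with θ hθ
    rw [nndist_comm, nndist_eq_nnnorm, ← mem_sphere_zero_iff_norm.1 hθ]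
    exact abs_norm_sub_norm_le θ x
  have hbound : ∀ x ∉ sphere (0 : E) 1,
      ‖(1 - ‖x‖) * ∫ θ, ‖h θ - h ω‖ * (‖x - θ‖ ^ (m + 1))⁻¹ ∂σ‖ₑ ≤
        ∫⁻ θ, ‖1 - ‖x‖‖₊ * (edist x θ ^ (m + 1))⁻¹ * ‖h θ - h ω‖ₑ ∂σ := by
    intro x hx
    rw [← integral_const_mul]
    refine (enorm_integral_le_lintegral_enorm _).trans_eq (lintegral_congr_ae ?_)
    filter_upwards [hσ] with θ hθ
    have hxθ : ‖x - θ‖ ≠ 0 := norm_ne_zero_iff.2 (sub_ne_zero.2 fun h => hx (h ▸ hθ))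
    rw [enorm_mul, enorm_mul, enorm_norm, enorm_inv (pow_ne_zero _ hxθ), enorm_pow, enorm_norm,
      edist_eq_enorm_sub, mul_comm ‖h θ - h ω‖ₑ, ← mul_assoc, enorm_eq_nnnorm (1 - ‖x‖)]
  rw [tendsto_zero_iff_enorm_tendsto_zero]
  have hlim := (upperAhlforsRegular_hausdorffMeasure_restrict_sphere m)
    |>.tendsto_lintegral_mul_inv_edist_pow (tendsto_id.mono_left nhdsWithin_le_nhds) hδ
      (.of_forall hδ_le) hdiff.aestronglyMeasurable.enorm hdiff.2.ne hosc
  exact tendsto_of_tendsto_of_tendsto_of_le_of_le' tendsto_const_nhds hlim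
    (.of_forall fun _ => zero_le) (eventually_mem_nhdsWithin.mono hbound)

end Sphere

/-- For `n ≥ 2` and `h` continuous on the unit sphere, for every `θ* ∈ ∂B`,
`(1−|x|)·∫_{∂B} |h(θ)−h(θ*)|·|x−θ|^{−n} dH^{n−1}(θ) → 0` as `x → θ*` from inside
the ball. -/
theorem martin_modulus_vanishing (n : ℕ) (hn : 2 ≤ n)
    (h : EuclideanSpace ℝ (Fin n) → ℝ)
    (hc : ContinuousOn h (Metric.sphere (0 : EuclideanSpace ℝ (Fin n)) 1))
    (θs : EuclideanSpace ℝ (Fin n))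
    (hθs : θs ∈ Metric.sphere (0 : EuclideanSpace ℝ (Fin n)) 1) :
    Filter.Tendsto
      (fun x : EuclideanSpace ℝ (Fin n) =>
        (1 - ‖x‖) * ∫ θ in Metric.sphere (0 : EuclideanSpace ℝ (Fin n)) 1,
          |h θ - h θs| * (‖x - θ‖ ^ n)⁻¹ ∂(μH[(n : ℝ) - 1]))
      (nhdsWithin θs (Metric.ball 0 1)) (nhds 0) := by
  obtain ⟨m, rfl⟩ := Nat.exists_eq_add_of_le' (one_le_two.trans hn)
  have : Fact (finrank ℝ (EuclideanSpace ℝ (Fin (m + 1))) = m + 1) := ⟨by simp⟩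
  simpa using (martin_modulus_vanishing_general hθs (integrableOn_sphere_of_continuousOn hc)
    (hc θs hθs)).mono_left (nhdsWithin_mono θs sphere_disjoint_ball.subset_compl_left)
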